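/- Let S ⊆ {-1,0,1}^d \ {0} be a mostly symmetric step set (symmetric over all but the d-th axis) with positive weights, taking a step forwards and backwards in each coordinate. Then for every n ≥ 0, s_n equals the coefficient of z_1^n ··· z_d^n t^n in the power series expansion (around the origin) of G(z,t)/H(z,t), where G(z,t) = (1+z_1)···(1+z_{d-1}) · (1 - t z_1···z_d (Q(ẑ) + 2 z_d A(ẑ))) and H(z,t) = (1 - z_d) · (1 - t z_1···z_d S̄(z)) · (1 - t z_1···z_d (Q(ẑ) + z_d A(ẑ))), with S̄(z) = S(z_1,…,z_{d-1}, 1/z_d). -/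

import Mathlib

open Finset Filter
open scoped Classical

noncomputable section

/-- Total weight of walks of length `n` with steps in `S` (weighted by `w`),
starting at the origin and never leaving `ℕ^d`. -/
def walkWeight (d : ℕ) (S : Finset (Fin d → ℤ)) (w : (Fin d → ℤ) → ℝ) (n : ℕ) : ℝ :=
  ∑ f : Fin n → {i // i ∈ S},
    if ∀ m : ℕ, m ≤ n → ∀ j : Fin d,
        0 ≤ ∑ k ∈ Finset.univ.filter (fun k : Fin n => (k : ℕ) < m), ((f k : Fin d → ℤ) j)
    then ∏ k : Fin n, w (f k) else 0

/-- The step set `S` (with weights `w`) is symmetric over the `k`-th coordinate axis. -/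
def SymmetricAxis (d : ℕ) (S : Finset (Fin d → ℤ)) (w : (Fin d → ℤ) → ℝ) (k : Fin d) : Prop :=
  ∀ i ∈ S, Function.update i k (-(i k)) ∈ S ∧ w (Function.update i k (-(i k))) = w i

/-- The monomial `z_1^{i_1+1}⋯z_d^{i_{d-1}+1}·z_{last}^{1-i_{last}}` corresponding to a
step `i`, as a power series in the variables `z_1,…,z_{d+1},t` of `Fin (d+2)`
(`z_j = X (Fin.castSucc j)` and `t = X (Fin.last (d+1))`). -/
def stepMonomial (d : ℕ) (i : Fin (d + 1) → ℤ) : MvPowerSeries (Fin (d + 2)) ℝ :=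
  ∏ j : Fin (d + 1), MvPowerSeries.X (Fin.castSucc j) ^
    (if j = Fin.last d then (1 - i j).toNat else (i j + 1).toNat)

/-- The polynomial `(z_1⋯z_d)·S̄(z)` where `S̄(z) = S(z_1,…,z_{d-1},1/z_d)`. -/
def zProdSbar (d : ℕ) (S : Finset (Fin (d + 1) → ℤ)) (w : (Fin (d + 1) → ℤ) → ℝ) :
    MvPowerSeries (Fin (d + 2)) ℝ :=
  ∑ i ∈ S, MvPowerSeries.C (σ := Fin (d + 2)) (R := ℝ) (w i) * stepMonomial d i

/-- The polynomial `(z_1⋯z_d)·(Q(ẑ) + z_d A(ẑ))`. -/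
def zProdQA (d : ℕ) (S : Finset (Fin (d + 1) → ℤ)) (w : (Fin (d + 1) → ℤ) → ℝ) :
    MvPowerSeries (Fin (d + 2)) ℝ :=
  ∑ i ∈ S.filter fun i => i (Fin.last d) ≤ 0,
    MvPowerSeries.C (σ := Fin (d + 2)) (R := ℝ) (w i) * stepMonomial d i

/-- The polynomial `(z_1⋯z_d)·(Q(ẑ) + 2 z_d A(ẑ))`. -/
def zProdQ2A (d : ℕ) (S : Finset (Fin (d + 1) → ℤ)) (w : (Fin (d + 1) → ℤ) → ℝ) :
    MvPowerSeries (Fin (d + 2)) ℝ :=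
  ∑ i ∈ S.filter fun i => i (Fin.last d) ≤ 0,
    MvPowerSeries.C (σ := Fin (d + 2)) (R := ℝ) ((if i (Fin.last d) = -1 then 2 else 1) * w i) *
      stepMonomial d i

/-!
The weighted step set is invariant under the sign changes of all coordinates but the last. By the
reflection principle, the walks in the orthant are therefore counted by the signed sum over the
reflections of the walks in the half space `0 ≤ x_d`: in Laurent polynomials, this is the product of
their generating polynomial `halfSpacePoly` with the factors `1 - z_k⁻²`, whose coefficients vanish
on `x_k = -1`. Summing these coefficients over the orthant, `1 - z_k⁻² = (1 - z_k⁻¹) (1 + z_k⁻¹)`: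
the first factor telescopes and leaves the end points with `x_k = 0`, and the symmetry turns the
second one into `1 + z_k`.

For the half space, the kernel method suggests the series
`(1 - t (Q + 2 z_d⁻¹ A)) / ((1 - t S) (1 - t (Q + z_d⁻¹ A)))`. Its coefficients satisfy the
recurrence of the walks where `0 ≤ x_d`, because the second denominator only involves steps with
`x_d ≤ 0`, and they vanish on `x_d = -1`, which is an identity between binomial coefficients.

Finally, the substitution `z_d ↦ 1 / z_d`, `t ↦ t z_1 ⋯ z_d` moves the coefficients over the lattice
point `0` to the diagonal of `G / H`, where the factor `1 / (1 - z_d)` sums over the last axis.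
-/

open scoped AddMonoidAlgebra

section KernelMethod

variable {A : Type*} [CommRing A]

/-- The coefficient of `t ^ n` in `(1 - t (a + m)) / ((1 - t s) (1 - t m))`, the shape in which
the kernel method delivers the generating function of the walks in a half space. -/
def kernelPoly (s a m : A) (n : ℕ) : A :=
  s ^ n - a * ∑ i ∈ Finset.range n, s ^ i * m ^ (n - 1 - i)

@[simp]
lemma kernelPoly_zero (s a m : A) : kernelPoly s a m 0 = 1 := by simp [kernelPoly]

lemma kernelPoly_succ (s a m : A) (n : ℕ) :
    kernelPoly s a m (n + 1) = s * kernelPoly s a m n - a * m ^ n := by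
  rw [kernelPoly, kernelPoly, geom_sum₂_comm, geom_sum₂_comm s m n, Nat.add_sub_cancel,
    geom_sum₂_succ_eq]
  ring

lemma map_kernelPoly {B F : Type*} [CommRing B] [FunLike F A B] [RingHomClass F A B] (g : F)
    (s a m : A) (n : ℕ) :
    g (kernelPoly s a m n) = kernelPoly (g s) (g a) (g m) n := by
  simp [kernelPoly]

lemma sum_range_add_pow_mul_pow (b m : A) (n : ℕ) :
    ∑ i ∈ Finset.range n, (b + m) ^ i * m ^ (n - 1 - i) =
      ∑ j ∈ Finset.range n, n.choose (j + 1) * b ^ j * m ^ (n - 1 - j) := by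
  have shift (g : ℕ → A) (k : ℕ) :
      ∑ i ∈ Finset.range k, g i * m ^ (k - i) =
        m * ∑ i ∈ Finset.range k, g i * m ^ (k - 1 - i) := by
    rw [Finset.mul_sum]
    refine Finset.sum_congr rfl fun i hi => ?_
    rw [show k - i = k - 1 - i + 1 by have := Finset.mem_range.1 hi; omega, pow_succ]
    ring
  induction n with
  | zero => simp
  | succ n ih =>
    have pascal (j : ℕ) : ((n + 1).choose (j + 1) : A) * b ^ j * m ^ (n - j) =
        b ^ j * m ^ (n - j) * n.choose j + n.choose (j + 1) * b ^ j * m ^ (n - j) := by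
      rw [Nat.choose_succ_succ]
      push_cast
      ring
    simp only [Nat.add_sub_cancel, pascal]
    rw [Finset.sum_add_distrib, ← add_pow, Finset.sum_range_succ, Finset.sum_range_succ _ n,
      shift, shift, ih]
    simp [add_comm]

lemma choose_mul_choose_succ (n j : ℕ) :
    n.choose j * (n - j).choose (j + 1) = n.choose (j + 1) * (n - 1 - j).choose j := by
  rw [show n - 1 - j = n - (j + 1) by omega]
  have h (i : ℕ) (hi : i ≤ 2 * j + 1) := Nat.choose_mul (n := n) hi
  have h1 := h j (by omega)
  have h2 := h (j + 1) (by omega)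
  rw [show 2 * j + 1 - j = j + 1 by omega] at h1
  rw [show 2 * j + 1 - (j + 1) = j by omega] at h2
  rw [← h1, ← h2, Nat.choose_symm_half]

section Graded

variable {σ : Type*} [SetLike σ A] [AddSubgroupClass σ A] {𝒜 : ℤ → σ} [GradedRing 𝒜]

lemma proj_mul_add_pow {p a q : A} {c : ℤ} {i : ℕ} (hp : p ∈ 𝒜 (c + i)) (ha : a ∈ 𝒜 (-1))
    (hq : q ∈ 𝒜 0) (N : ℕ) :
    GradedRing.proj 𝒜 c (p * (a + q) ^ N) = N.choose i * (p * a ^ i * q ^ (N - i)) := by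
  have mem (k : ℕ) : p * (a ^ k * q ^ (N - k) * N.choose k) ∈ 𝒜 (c + i - k) := by
    have hmem := SetLike.mul_mem_graded hp (SetLike.mul_mem_graded
      (SetLike.mul_mem_graded (SetLike.pow_mem_graded k ha) (SetLike.pow_mem_graded (N - k) hq))
      (SetLike.natCast_mem_graded 𝒜 (N.choose k)))
    convert hmem using 2
    simp
    ring
  rw [add_pow, Finset.mul_sum, map_sum, Finset.sum_eq_single i]
  · rw [GradedRing.proj_apply, DirectSum.decompose_of_mem_same _ (by simpa using mem i)]
    ring
  · intro k _ hk
    rw [GradedRing.proj_apply, DirectSum.decompose_of_mem_ne _ (mem k) (by omega)]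
  · intro hi
    rw [Nat.choose_eq_zero_of_lt (by simpa using hi)]
    simp

/-- By `choose_mul_choose_succ`, the two terms of `kernelPoly` have the same component of degree
`-1`, separately for each power of `b`. -/
lemma proj_kernelPoly_eq_zero {a q b : A} (ha : a ∈ 𝒜 (-1)) (hq : q ∈ 𝒜 0) (hb : b ∈ 𝒜 1)
    (n : ℕ) : GradedRing.proj 𝒜 (-1) (kernelPoly (b + (a + q)) a (a + q) n) = 0 := by
  have hbpow (j : ℕ) : b ^ j ∈ 𝒜 j := by simpa using SetLike.pow_mem_graded j hb
  have hpow : GradedRing.proj 𝒜 (-1) (b ^ n) = 0 := by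
    rw [GradedRing.proj_apply, DirectSum.decompose_of_mem_ne _ (hbpow n) (by omega)]
  have nsmul (k : ℕ) (x : A) :
      GradedRing.proj 𝒜 (-1) (k * x) = k * GradedRing.proj 𝒜 (-1) x := by
    simp only [← nsmul_eq_mul, map_nsmul]
  rw [kernelPoly, sum_range_add_pow_mul_pow, add_pow, Finset.sum_range_succ, Finset.mul_sum,
    map_sub, map_add, map_sum, map_sum]
  simp only [Nat.sub_self, pow_zero, mul_one, Nat.choose_self, Nat.cast_one, hpow, add_zero]
  rw [← Finset.sum_sub_distrib]
  refine Finset.sum_eq_zero fun j _ => ?_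
  have h1 := proj_mul_add_pow (c := -1) (i := j + 1) (by simpa using hbpow j) ha hq (n - j)
  have hab : a * b ^ j ∈ 𝒜 (-1 + j) := SetLike.mul_mem_graded ha (hbpow j)
  have h2 := proj_mul_add_pow hab ha hq (n - 1 - j)
  have hchoose := congrArg (Nat.cast (R := A)) (choose_mul_choose_succ n j)
  push_cast at hchoose
  rw [mul_comm _ (n.choose j : A), mul_assoc (n.choose (j + 1) : A), mul_left_comm a, nsmul, nsmul,
    ← mul_assoc a, h1, h2, show n - j - (j + 1) = n - 1 - j - j by omega]
  linear_combination b ^ j * a ^ (j + 1) * q ^ (n - 1 - j - j) * hchoose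

end Graded

end KernelMethod

section StepPolynomials

variable {R M : Type*} [CommRing R]

/-- The generating polynomial `∑ i ∈ T, w i z ^ i` of a weighted step set `T`; for `M = ι → ℤ` the
elements of `R[M]` are the Laurent polynomials in the variables `z_k`, `k : ι`. -/
def stepPoly (T : Finset M) (w : M → R) : R[M] :=
  ∑ i ∈ T, AddMonoidAlgebra.single i (w i)

lemma stepPoly_mem_gradeBy {N : Type*} {deg : M → N} {T : Finset M} {c : N}
    (hT : ∀ i ∈ T, deg i = c) (w : M → R) :
    stepPoly T w ∈ AddMonoidAlgebra.gradeBy R deg c :=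
  sum_mem fun i hi => hT i hi ▸ AddMonoidAlgebra.single_mem_gradeBy deg i (w i)

variable [AddCommGroup M]

lemma coeff_stepPoly_mul (T : Finset M) (w : M → R) (f : R[M]) (x : M) :
    (stepPoly T w * f).coeff x = ∑ i ∈ T, w i * f.coeff (x - i) := by
  simp [stepPoly, Finset.sum_mul, Finsupp.finsetSum_apply, neg_add_eq_sub]

lemma coeff_stepPoly_mul_congr {T : Finset M} {w : M → R} {f g : R[M]} {x : M}
    (h : ∀ i ∈ T, f.coeff (x - i) = g.coeff (x - i)) :
    (stepPoly T w * f).coeff x = (stepPoly T w * g).coeff x := by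
  rw [coeff_stepPoly_mul, coeff_stepPoly_mul]
  exact Finset.sum_congr rfl fun i hi => by rw [h i hi]

lemma coeff_stepPoly_mul_eq_zero {T : Finset M} {w : M → R} {f : R[M]} {x : M}
    (h : ∀ i ∈ T, f.coeff (x - i) = 0) : (stepPoly T w * f).coeff x = 0 := by
  rw [coeff_stepPoly_mul]
  exact Finset.sum_eq_zero fun i hi => by rw [h i hi, mul_zero]

lemma coeff_stepPoly_pow_eq_zero {N : Type*} [AddCommGroup N] [LinearOrder N]
    [IsOrderedAddMonoid N] {deg : M →+ N} {T : Finset M} (hT : ∀ i ∈ T, deg i ≤ 0) (w : M → R)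
    (n : ℕ) {x : M} (hx : 0 < deg x) : (stepPoly T w ^ n).coeff x = 0 := by
  induction n generalizing x with
  | zero =>
    rw [pow_zero, AddMonoidAlgebra.one_def, AddMonoidAlgebra.coeff_single,
      Finsupp.single_eq_of_ne]
    rintro rfl
    simp at hx
  | succ n ih =>
    rw [pow_succ']
    refine coeff_stepPoly_mul_eq_zero fun i hi => ih ?_
    rw [map_sub, sub_pos]
    exact (hT i hi).trans_lt hx

lemma coeff_proj_gradeBy {N : Type*} [AddMonoid N] [DecidableEq N] (deg : M →+ N) (f : R[M])
    (x : M) :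
    (GradedRing.proj (AddMonoidAlgebra.gradeBy R deg) (deg x) f).coeff x = f.coeff x := by
  induction f using AddMonoidAlgebra.induction_linear with
  | zero => simp
  | add f g hf hg => simp only [map_add, AddMonoidAlgebra.coeff_add, Finsupp.add_apply, hf, hg]
  | single y c =>
    have hy := AddMonoidAlgebra.single_mem_gradeBy deg y c
    rw [GradedRing.proj_apply]
    by_cases h : deg y = deg x
    · rw [DirectSum.decompose_of_mem_same _ (h ▸ hy)]
    · rw [DirectSum.decompose_of_mem_ne _ hy h, AddMonoidAlgebra.coeff_single,
        Finsupp.single_eq_of_ne (by rintro rfl; exact h rfl)]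
      rfl

variable {ι : Type*}

/-- The Laurent polynomials `[t ^ n] (1 - t (Q + 2 A)) / ((1 - t S) (1 - t (Q + A)))`, where `Q`
and `A` collect the steps of `S` whose `l`-th coordinate is `0` and `-1`. On the half space
`0 ≤ x l` they count the walks that never leave this half space. -/
def halfSpacePoly (S : Finset (ι → ℤ)) (w : (ι → ℤ) → R) (l : ι) : ℕ → R[ι → ℤ] :=
  kernelPoly (stepPoly S w) (stepPoly (S.filter fun i => i l = -1) w)
    (stepPoly (S.filter fun i => i l ≤ 0) w)

lemma halfSpacePoly_zero (S : Finset (ι → ℤ)) (w : (ι → ℤ) → R) (l : ι) :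
    halfSpacePoly S w l 0 = 1 :=
  kernelPoly_zero _ _ _

lemma halfSpacePoly_succ (S : Finset (ι → ℤ)) (w : (ι → ℤ) → R) (l : ι) (n : ℕ) :
    halfSpacePoly S w l (n + 1) = stepPoly S w * halfSpacePoly S w l n -
      stepPoly (S.filter fun i => i l = -1) w * stepPoly (S.filter fun i => i l ≤ 0) w ^ n :=
  kernelPoly_succ _ _ _ n

lemma coeff_halfSpacePoly_succ (S : Finset (ι → ℤ)) (w : (ι → ℤ) → R) {l : ι} (n : ℕ)
    {x : ι → ℤ} (hx : 0 ≤ x l) :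
    (halfSpacePoly S w l (n + 1)).coeff x = (stepPoly S w * halfSpacePoly S w l n).coeff x := by
  rw [halfSpacePoly_succ, AddMonoidAlgebra.coeff_sub, Finsupp.sub_apply, sub_eq_self]
  refine coeff_stepPoly_mul_eq_zero fun i hi => ?_
  refine coeff_stepPoly_pow_eq_zero (deg := Pi.evalAddMonoidHom (fun _ => ℤ) l)
    (fun i hi => (Finset.mem_filter.1 hi).2) w n ?_
  rw [Pi.evalAddMonoidHom_apply, Pi.sub_apply, (Finset.mem_filter.1 hi).2]
  omega

lemma coeff_halfSpacePoly_eq_zero {S : Finset (ι → ℤ)} {l : ι}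
    (hS : ∀ i ∈ S, i l = -1 ∨ i l = 0 ∨ i l = 1) (w : (ι → ℤ) → R) (n : ℕ) {x : ι → ℤ}
    (hx : x l = -1) : (halfSpacePoly S w l n).coeff x = 0 := by
  have hm : stepPoly (S.filter fun i => i l ≤ 0) w =
      stepPoly (S.filter fun i => i l = -1) w + stepPoly (S.filter fun i => i l = 0) w := by
    simp only [stepPoly, Finset.sum_filter, ← Finset.sum_add_distrib]
    refine Finset.sum_congr rfl fun i hi => ?_
    rcases hS i hi with h | h | h <;> simp [h]
  have hs : stepPoly S w = stepPoly (S.filter fun i => i l = 1) w +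
      stepPoly (S.filter fun i => i l ≤ 0) w := by
    simp only [stepPoly, Finset.sum_filter, ← Finset.sum_add_distrib]
    refine Finset.sum_congr rfl fun i hi => ?_
    rcases hS i hi with h | h | h <;> simp [h]
  have mem (c : ℤ) := stepPoly_mem_gradeBy (deg := Pi.evalAddMonoidHom (fun _ : ι => ℤ) l)
    (T := S.filter fun i => i l = c) (fun i hi => (Finset.mem_filter.1 hi).2) w
  rw [← coeff_proj_gradeBy (Pi.evalAddMonoidHom (fun _ => ℤ) l), Pi.evalAddMonoidHom_apply, hx,
    halfSpacePoly, hs, hm, proj_kernelPoly_eq_zero (mem (-1)) (mem 0) (mem 1)]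
  rfl

end StepPolynomials

section Reflections

variable {R ι : Type*} [DecidableEq ι]

/-- The reflection of the lattice that negates the `k`-th coordinate. -/
def flipCoord (k : ι) : (ι → ℤ) ≃+ (ι → ℤ) where
  toFun x := Function.update x k (-(x k))
  invFun x := Function.update x k (-(x k))
  left_inv x := by simp
  right_inv x := by simp
  map_add' x y := by ext j; by_cases h : j = k <;> simp [h]; ring

lemma flipCoord_apply (k : ι) (x : ι → ℤ) : flipCoord k x = Function.update x k (-(x k)) := rfl

lemma flipCoord_apply_of_ne {j k : ι} (h : j ≠ k) (x : ι → ℤ) : flipCoord k x j = x j := by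
  simp [flipCoord_apply, h]

@[simp]
lemma flipCoord_flipCoord (k : ι) (x : ι → ℤ) : flipCoord k (flipCoord k x) = x :=
  (flipCoord k).left_inv x

/-- The weighted step set is invariant under `z_k ↦ 1 / z_k`; this is `SymmetricAxis` for
arbitrary index types and weights. -/
def IsFlipInvariant (S : Finset (ι → ℤ)) (w : (ι → ℤ) → R) (k : ι) : Prop :=
  ∀ i ∈ S, flipCoord k i ∈ S ∧ w (flipCoord k i) = w i

lemma IsFlipInvariant.filter {S : Finset (ι → ℤ)} {w : (ι → ℤ) → R} {k l : ι}
    (h : IsFlipInvariant S w k) (hkl : l ≠ k) (p : ℤ → Prop) [DecidablePred p] :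
    IsFlipInvariant (S.filter fun i => p (i l)) w k := fun i hi => by
  rw [Finset.mem_filter] at hi ⊢
  rw [flipCoord_apply_of_ne hkl]
  exact ⟨⟨(h i hi.1).1, hi.2⟩, (h i hi.1).2⟩

variable [CommRing R]

/-- The substitution of `1 / z_k` for `z_k` in Laurent polynomials. -/
def invVar (k : ι) : R[ι → ℤ] ≃+* R[ι → ℤ] :=
  AddMonoidAlgebra.mapDomainRingEquiv R (flipCoord k)

@[simp]
lemma invVar_single (k : ι) (x : ι → ℤ) (c : R) :
    invVar k (AddMonoidAlgebra.single x c) = AddMonoidAlgebra.single (flipCoord k x) c := by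
  simp [invVar]

lemma coeff_invVar (k : ι) (f : R[ι → ℤ]) (x : ι → ℤ) :
    (invVar k f).coeff x = f.coeff (flipCoord k x) := by
  rw [invVar, AddMonoidAlgebra.coeff_mapDomainRingEquiv]
  rfl

lemma IsFlipInvariant.invVar_stepPoly {T : Finset (ι → ℤ)} {w : (ι → ℤ) → R} {k : ι}
    (h : IsFlipInvariant T w k) : invVar k (stepPoly T w) = stepPoly T w := by
  rw [stepPoly, map_sum]
  refine Finset.sum_nbij' (flipCoord k) (flipCoord k) (fun i hi => (h i hi).1)
    (fun i hi => (h i hi).1) (by simp) (by simp) fun i hi => ?_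
  rw [invVar_single, (h i hi).2]

lemma IsFlipInvariant.invVar_halfSpacePoly {S : Finset (ι → ℤ)} {w : (ι → ℤ) → R} {k l : ι}
    (h : IsFlipInvariant S w k) (hkl : l ≠ k) (n : ℕ) :
    invVar k (halfSpacePoly S w l n) = halfSpacePoly S w l n := by
  rw [halfSpacePoly, map_kernelPoly, h.invVar_stepPoly, (h.filter hkl (· = -1)).invVar_stepPoly,
    (h.filter hkl (· ≤ 0)).invVar_stepPoly]

/-- The Laurent monomial `z_k ^ c`. -/
def varPow (k : ι) (c : ℤ) : R[ι → ℤ] :=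
  AddMonoidAlgebra.single (Pi.single k c) 1

lemma coeff_varPow_mul (k : ι) (c : ℤ) (f : R[ι → ℤ]) (x : ι → ℤ) :
    (varPow k c * f).coeff x = f.coeff (x - Pi.single k c) := by
  simp [varPow, neg_add_eq_sub]

lemma varPow_mul_varPow (k : ι) (c c' : ℤ) :
    (varPow k c * varPow k c' : R[ι → ℤ]) = varPow k (c + c') := by
  simp [varPow, AddMonoidAlgebra.single_mul_single, Pi.single_add]

lemma invVar_varPow_self (k : ι) (c : ℤ) : invVar k (varPow k c : R[ι → ℤ]) = varPow k (-c) := by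
  simp [varPow, flipCoord_apply, Pi.single, Function.update_idem]

lemma invVar_varPow_of_ne {j k : ι} (h : j ≠ k) (c : ℤ) :
    invVar k (varPow j c : R[ι → ℤ]) = varPow j c := by
  rw [varPow, invVar_single, flipCoord_apply]
  congr 1
  simp [h.symm]

end Reflections

section CoefficientSums

variable {R M : Type*} [CommRing R]

/-- The sum of the coefficients of `f : R[M]` over the exponents in `A`. -/
def coeffSum (A : Set M) : R[M] →ₗ[R] R :=
  Finsupp.linearCombination R (A.indicator 1) ∘ₗ
    (AddMonoidAlgebra.coeffLinearEquiv R : R[M] ≃ₗ[R] M →₀ R).toLinearMap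

lemma coeffSum_single (A : Set M) (x : M) (c : R) :
    coeffSum A (AddMonoidAlgebra.single x c) = c * A.indicator 1 x := by
  simp [coeffSum]

lemma coeffSum_congr {A : Set M} {f g : R[M]} (h : ∀ x ∈ A, f.coeff x = g.coeff x) :
    coeffSum A f = coeffSum A g := by
  rw [← sub_eq_zero, ← map_sub]
  refine (Finsupp.linearCombination_apply R (f - g).coeff).trans (Finset.sum_eq_zero fun x _ => ?_)
  by_cases hx : x ∈ A <;> simp [hx, h]

lemma coeffSum_sdiff {A B : Set M} (h : B ⊆ A) (f : R[M]) :
    coeffSum (A \ B) f = coeffSum A f - coeffSum B f := by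
  induction f using AddMonoidAlgebra.induction_linear with
  | zero => simp
  | add f g hf hg => simp only [map_add, hf, hg]; ring
  | single x c =>
    rw [coeffSum_single, coeffSum_single, coeffSum_single, Set.indicator_sdiff h, Pi.sub_apply,
      mul_sub]

lemma coeffSum_coe_finset (B : Finset M) (f : R[M]) :
    coeffSum (B : Set M) f = ∑ x ∈ B, f.coeff x := by
  induction f using AddMonoidAlgebra.induction_linear with
  | zero => simp
  | add f g hf hg => simp [hf, hg, Finset.sum_add_distrib]
  | single x c =>
    simp [coeffSum_single, Set.indicator_apply, Finsupp.single_apply]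

lemma coeffSum_range {e : ℕ → M} (he : Function.Injective e) {f : R[M]} {m : ℕ}
    (hf : ∀ y, m ≤ y → f.coeff (e y) = 0) :
    coeffSum (Set.range e) f = ∑ y ∈ Finset.range m, f.coeff (e y) := by
  let B := (Finset.range m).map ⟨e, he⟩
  have hB : (B : Set M) ⊆ Set.range e := by simp [B]
  have hout : coeffSum (Set.range e \ B) f = 0 := by
    rw [coeffSum_congr (g := 0), map_zero]
    rintro _ ⟨⟨y, rfl⟩, hy⟩
    exact hf y (by simpa [B, he.eq_iff] using hy)
  rw [← sub_add_cancel (coeffSum (Set.range e) f) (coeffSum B f), ← coeffSum_sdiff hB, hout,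
    zero_add, coeffSum_coe_finset, Finset.sum_map]
  rfl

lemma coeffSum_single_mul [AddMonoid M] (A : Set M) (y : M) (f : R[M]) :
    coeffSum A (AddMonoidAlgebra.single y 1 * f) = coeffSum ((y + ·) ⁻¹' A) f := by
  induction f using AddMonoidAlgebra.induction_linear with
  | zero => simp
  | add f g hf hg => simp [mul_add, hf, hg]
  | single x c =>
    simp [AddMonoidAlgebra.single_mul_single, coeffSum_single, Set.indicator_apply]

variable {ι : Type*}

/-- The face of the nonnegative orthant on which the coordinates in `s` vanish. -/
def orthantFace (s : Finset ι) : Set (ι → ℤ) :=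
  {x | 0 ≤ x ∧ ∀ k ∈ s, x k = 0}

lemma mem_orthantFace_empty {x : ι → ℤ} : x ∈ orthantFace ∅ ↔ 0 ≤ x := by simp [orthantFace]

variable [DecidableEq ι]

lemma coeffSum_invVar (A : Set (ι → ℤ)) (k : ι) (f : R[ι → ℤ]) :
    coeffSum A (invVar k f) = coeffSum (flipCoord k ⁻¹' A) f := by
  induction f using AddMonoidAlgebra.induction_linear with
  | zero => simp
  | add f g hf hg => simp [hf, hg]
  | single x c => simp [coeffSum_single, Set.indicator_apply]

lemma preimage_flipCoord_orthantFace {s : Finset ι} {k : ι} (hk : k ∈ s) :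
    flipCoord k ⁻¹' orthantFace s = orthantFace s := by
  have fixed {x : ι → ℤ} (hx : x ∈ orthantFace s) : flipCoord k x = x := by
    simp [flipCoord_apply, hx.2 k hk]
  ext x
  refine ⟨fun h => ?_, fun h => by rwa [Set.mem_preimage, fixed h]⟩
  have hx := fixed (Set.mem_preimage.1 h)
  rw [flipCoord_flipCoord] at hx
  rwa [hx]

lemma orthantFace_insert {s : Finset ι} {k : ι} (hk : k ∉ s) :
    orthantFace (insert k s) =
      orthantFace s \ ((Pi.single k (-1) + ·) ⁻¹' orthantFace s) := by
  ext x
  simp only [orthantFace, Set.mem_sdiff, Set.mem_preimage, Set.mem_ofPred_eq, Pi.le_def,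
    Pi.add_apply, Pi.single_apply, Pi.zero_apply, Finset.forall_mem_insert]
  grind

lemma orthantFace_compl_singleton [Fintype ι] (l : ι) :
    orthantFace {l}ᶜ = Set.range fun y : ℕ => (Pi.single l (y : ℤ) : ι → ℤ) := by
  ext x
  constructor
  · rintro ⟨hx, hface⟩
    refine ⟨(x l).toNat, funext fun k => ?_⟩
    by_cases hk : k = l
    · subst hk
      simpa using hx k
    · simp [hk, hface k (by simpa using hk)]
  · rintro ⟨y, rfl⟩
    exact ⟨Pi.single_nonneg.2 y.cast_nonneg, fun k hk =>
      Pi.single_eq_of_ne (by simpa using hk) _⟩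

lemma coeffSum_one_sub_varPow_mul {s : Finset ι} {k : ι} (hk : k ∉ s) (f : R[ι → ℤ]) :
    coeffSum (orthantFace s) ((1 - varPow k (-1)) * f) =
      coeffSum (orthantFace (insert k s)) f := by
  have hsub : (Pi.single k (-1) + ·) ⁻¹' orthantFace s ⊆ orthantFace s := by
    intro x
    simp only [orthantFace, Set.mem_preimage, Set.mem_ofPred_eq, Pi.le_def,
      Pi.add_apply, Pi.single_apply, Pi.zero_apply]
    grind
  rw [sub_mul, one_mul, map_sub, varPow, coeffSum_single_mul, orthantFace_insert hk,
    coeffSum_sdiff hsub]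

lemma coeffSum_one_sub_varPow_neg_two_mul {s : Finset ι} {k : ι} (hk : k ∉ s) {f : R[ι → ℤ]}
    (hf : invVar k f = f) :
    coeffSum (orthantFace s) ((1 - varPow k (-2)) * f) =
      coeffSum (orthantFace (insert k s)) ((1 + varPow k 1) * f) := by
  have factor : (1 - varPow k (-2) : R[ι → ℤ]) =
      (1 - varPow k (-1)) * (1 + varPow k (-1)) := by
    have : varPow k (-2) = (varPow k (-1) * varPow k (-1) : R[ι → ℤ]) := by
      rw [varPow_mul_varPow]
      rfl
    rw [this]
    ring
  rw [factor, mul_assoc, coeffSum_one_sub_varPow_mul hk,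
    ← preimage_flipCoord_orthantFace (Finset.mem_insert_self k s), ← coeffSum_invVar,
    preimage_flipCoord_orthantFace (Finset.mem_insert_self k s)]
  simp [invVar_varPow_self, hf]

/-- The product of `f` with the factors `1 - z_k⁻²`, `k ∈ s`. If `f` is invariant under
`z_k ↦ 1 / z_k`, then `z_k` times this product changes sign, so its coefficients on the hyperplane
`x k = -1` vanish: this is the signed sum over the reflections in the reflection principle. -/
def antisymmetrize (s : Finset ι) (f : R[ι → ℤ]) : R[ι → ℤ] :=
  (∏ k ∈ s, (1 - varPow k (-2))) * f

lemma antisymmetrize_insert {s : Finset ι} {k : ι} (hk : k ∉ s) (f : R[ι → ℤ]) :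
    antisymmetrize (insert k s) f = (1 - varPow k (-2)) * antisymmetrize s f := by
  rw [antisymmetrize, Finset.prod_insert hk, mul_assoc, antisymmetrize]

lemma coeff_one_sub_varPow_mul (k : ι) (c : ℤ) (f : R[ι → ℤ]) (x : ι → ℤ) :
    ((1 - varPow k c) * f).coeff x = f.coeff x - f.coeff (x - Pi.single k c) := by
  rw [sub_mul, one_mul, AddMonoidAlgebra.coeff_sub, Finsupp.sub_apply, coeff_varPow_mul]

lemma coeffSum_antisymmetrize (s : Finset ι) {f : R[ι → ℤ]} (hf : ∀ k ∈ s, invVar k f = f) :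
    coeffSum (orthantFace ∅) (antisymmetrize s f) =
      coeffSum (orthantFace s) ((∏ k ∈ s, (1 + varPow k 1)) * f) := by
  induction s using Finset.induction_on generalizing f with
  | empty => simp [antisymmetrize]
  | insert k s hk ih =>
    have hne {j : ι} (hj : j ∈ s) : j ≠ k := ne_of_mem_of_not_mem hj hk
    have hprod : invVar k ((∏ j ∈ s, (1 + varPow j 1)) * f) =
        (∏ j ∈ s, (1 + varPow j 1)) * f := by
      rw [map_mul, map_prod, hf k (Finset.mem_insert_self k s)]
      congr 1
      refine Finset.prod_congr rfl fun j hj => ?_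
      rw [map_add, map_one, invVar_varPow_of_ne (hne hj)]
    rw [antisymmetrize, Finset.prod_insert hk, mul_assoc, mul_left_comm]
    refine (ih fun j hj => ?_).trans ?_
    · rw [map_mul, map_sub, map_one, invVar_varPow_of_ne (hne hj).symm,
        hf j (Finset.mem_insert_of_mem hj)]
    · rw [mul_left_comm, coeffSum_one_sub_varPow_neg_two_mul hk hprod, Finset.prod_insert hk,
        mul_assoc]

lemma coeff_antisymmetrize_eq_zero {s : Finset ι} {f : R[ι → ℤ]} {k : ι} (hk : k ∈ s)
    (hf : invVar k f = f) {x : ι → ℤ} (hx : x k = -1) : (antisymmetrize s f).coeff x = 0 := by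
  have hinv : invVar k (antisymmetrize (s.erase k) f) = antisymmetrize (s.erase k) f := by
    rw [antisymmetrize, map_mul, map_prod, hf]
    congr 1
    refine Finset.prod_congr rfl fun j hj => ?_
    rw [map_sub, map_one, invVar_varPow_of_ne (Finset.ne_of_mem_erase hj)]
  have hflip : x - Pi.single k (-2) = flipCoord k x := by
    ext j
    by_cases hj : j = k
    · subst hj
      simp [flipCoord_apply, hx]
    · simp [flipCoord_apply, hj]
  rw [← Finset.insert_erase hk, antisymmetrize_insert (Finset.notMem_erase k s),
    coeff_one_sub_varPow_mul, hflip, ← coeff_invVar, hinv, sub_self]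

lemma coeff_antisymmetrize_congr {s : Finset ι} {l : ι} (hl : l ∉ s) {f g : R[ι → ℤ]} {c : ℤ}
    (h : ∀ x : ι → ℤ, x l = c → f.coeff x = g.coeff x) {x : ι → ℤ} (hx : x l = c) :
    (antisymmetrize s f).coeff x = (antisymmetrize s g).coeff x := by
  induction s using Finset.induction_on generalizing x with
  | empty => simpa [antisymmetrize] using h x hx
  | insert k s hk ih =>
    rw [Finset.mem_insert, not_or] at hl
    simp only [antisymmetrize_insert hk, coeff_one_sub_varPow_mul]
    rw [ih hl.2 hx, ih hl.2 (by simp [hl.1, hx])]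

lemma coeff_antisymmetrize_one (s : Finset ι) {x : ι → ℤ} (hx : 0 ≤ x) :
    (antisymmetrize s (1 : R[ι → ℤ])).coeff x = (1 : R[ι → ℤ]).coeff x := by
  induction s using Finset.induction_on generalizing x with
  | empty => simp [antisymmetrize]
  | insert k s hk ih =>
    have hle : x ≤ x - Pi.single k (-2) := by simp [le_sub_self_iff]
    have hne : x - Pi.single k (-2) ≠ 0 := fun h0 => by
      have h0k := congrFun h0 k
      have hxk : 0 ≤ x k := hx k
      rw [Pi.sub_apply, Pi.single_eq_same, Pi.zero_apply] at h0k
      omega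
    rw [antisymmetrize_insert hk, coeff_one_sub_varPow_mul, ih hx, ih (hx.trans hle),
      AddMonoidAlgebra.one_def, AddMonoidAlgebra.coeff_single, Finsupp.single_eq_of_ne hne,
      sub_zero]

end CoefficientSums

section Walks

variable {R ι : Type*}

/-- The walk with steps `f` starts at the origin and stays in the nonnegative orthant. -/
def StaysInOrthant {n : ℕ} (f : Fin n → ι → ℤ) : Prop :=
  ∀ m : ℕ, m ≤ n → ∀ j, 0 ≤ ∑ k ∈ Finset.univ.filter (fun k : Fin n => (k : ℕ) < m), f k j

lemma StaysInOrthant.sum_nonneg {n : ℕ} {f : Fin n → ι → ℤ} (h : StaysInOrthant f) :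
    0 ≤ ∑ k, f k := by
  intro j
  have := h n le_rfl j
  rwa [Finset.filter_true_of_mem fun k _ => k.isLt, ← Finset.sum_apply] at this

lemma staysInOrthant_snoc {n : ℕ} (f : Fin n → ι → ℤ) (i : ι → ℤ) :
    StaysInOrthant (Fin.snoc f i : Fin (n + 1) → ι → ℤ) ↔
      StaysInOrthant f ∧ 0 ≤ ∑ k, f k + i := by
  have sum_of_le (m : ℕ) (hm : m ≤ n) (j : ι) :
      ∑ k ∈ Finset.univ.filter (fun k : Fin (n + 1) => (k : ℕ) < m),
        (Fin.snoc f i : Fin (n + 1) → ι → ℤ) k j =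
      ∑ k ∈ Finset.univ.filter (fun k : Fin n => (k : ℕ) < m), f k j := by
    rw [Finset.sum_filter, Finset.sum_filter, Fin.sum_univ_castSucc]
    simp [hm]
  have sum_univ : ∑ k, (Fin.snoc f i : Fin (n + 1) → ι → ℤ) k = ∑ k, f k + i := by
    rw [Fin.sum_univ_castSucc]
    simp
  constructor
  · intro h
    refine ⟨fun m hm j => ?_, sum_univ ▸ h.sum_nonneg⟩
    rw [← sum_of_le m hm j]
    exact h m (by omega) j
  · rintro ⟨h, hlast⟩ m hm j
    rcases Nat.lt_or_ge n m with hmn | hmn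
    · rw [Finset.filter_true_of_mem fun k _ => by omega, ← Finset.sum_apply, sum_univ]
      exact hlast j
    · rw [sum_of_le m hmn j]
      exact h m hmn j

variable [CommRing R]

/-- The total weight of the walks of length `n` in the nonnegative orthant; this is `walkWeight`
for arbitrary index types and weights. -/
def walkSum (S : Finset (ι → ℤ)) (w : (ι → ℤ) → R) (n : ℕ) : R :=
  ∑ f : Fin n → {i // i ∈ S},
    if StaysInOrthant fun k => (f k : ι → ℤ) then ∏ k, w (f k) else 0

/-- The generating polynomial, by end point, of the walks of length `n` in the orthant. -/
def walkPoly (S : Finset (ι → ℤ)) (w : (ι → ℤ) → R) (n : ℕ) : R[ι → ℤ] :=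
  ∑ f : Fin n → {i // i ∈ S}, if StaysInOrthant fun k => (f k : ι → ℤ) then
    AddMonoidAlgebra.single (∑ k, (f k : ι → ℤ)) (∏ k, w (f k)) else 0

lemma walkSum_eq_coeffSum (S : Finset (ι → ℤ)) (w : (ι → ℤ) → R) (n : ℕ) :
    walkSum S w n = coeffSum (orthantFace ∅) (walkPoly S w n) := by
  rw [walkSum, walkPoly, map_sum]
  refine Finset.sum_congr rfl fun f _ => ?_
  split_ifs with h
  · simp [coeffSum_single, Set.indicator_of_mem (mem_orthantFace_empty.2 h.sum_nonneg)]
  · rw [map_zero]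

lemma walkPoly_zero (S : Finset (ι → ℤ)) (w : (ι → ℤ) → R) : walkPoly S w 0 = 1 := by
  have stays (f : Fin 0 → {i // i ∈ S}) : StaysInOrthant fun k => (f k : ι → ℤ) := by
    intro m _ j
    simp
  simp [walkPoly, stays, AddMonoidAlgebra.one_def]

lemma coeff_walkPoly_eq_zero (S : Finset (ι → ℤ)) (w : (ι → ℤ) → R) (n : ℕ) {x : ι → ℤ}
    (hx : ¬ 0 ≤ x) : (walkPoly S w n).coeff x = 0 := by
  rw [walkPoly, AddMonoidAlgebra.coeff_sum, Finsupp.finsetSum_apply]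
  refine Finset.sum_eq_zero fun f _ => ?_
  split_ifs with h
  · rw [AddMonoidAlgebra.coeff_single, Finsupp.single_eq_of_ne]
    rintro rfl
    exact hx h.sum_nonneg
  · rfl

lemma coeff_walkPoly_succ (S : Finset (ι → ℤ)) (w : (ι → ℤ) → R) (n : ℕ) {x : ι → ℤ}
    (hx : 0 ≤ x) : (walkPoly S w (n + 1)).coeff x = (stepPoly S w * walkPoly S w n).coeff x := by
  rw [walkPoly, ← (Fin.snocEquiv fun _ => {i // i ∈ S}).sum_comp, Fintype.sum_prod_type,
    stepPoly, ← Finset.sum_coe_sort S, walkPoly, Finset.sum_mul_sum]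
  simp only [AddMonoidAlgebra.coeff_sum, Finsupp.finsetSum_apply]
  refine Finset.sum_congr rfl fun i _ => Finset.sum_congr rfl fun f _ => ?_
  have snoc_coe : (fun k => (Fin.snocEquiv (fun _ => {i // i ∈ S}) (i, f) k : ι → ℤ)) =
      Fin.snoc (fun k => (f k : ι → ℤ)) (i : ι → ℤ) := by
    ext k : 1
    refine Fin.lastCases ?_ (fun k => ?_) k <;> simp [Fin.snocEquiv]
  have sum_snoc : ∑ k, (Fin.snocEquiv (fun _ => {i // i ∈ S}) (i, f) k : ι → ℤ) =
      i + ∑ k, (f k : ι → ℤ) := by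
    rw [Fin.sum_univ_castSucc, add_comm]
    simp [Fin.snocEquiv]
  have prod_snoc : ∏ k, w (Fin.snocEquiv (fun _ => {i // i ∈ S}) (i, f) k) =
      w i * ∏ k, w (f k) := by
    rw [Fin.prod_univ_castSucc, mul_comm]
    simp [Fin.snocEquiv]
  rw [sum_snoc, prod_snoc, snoc_coe, staysInOrthant_snoc]
  by_cases hf : StaysInOrthant fun k => (f k : ι → ℤ)
  · rw [if_pos hf, AddMonoidAlgebra.single_mul_single, add_comm (∑ k, _)]
    split_ifs with h
    · rfl
    · rw [AddMonoidAlgebra.coeff_single, Finsupp.single_eq_of_ne]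
      · rfl
      · rintro rfl
        exact h ⟨hf, hx⟩
  · simp [hf]

variable [DecidableEq ι]

lemma coeff_antisymmetrize_halfSpacePoly_succ {s : Finset ι} {l : ι} (hl : l ∉ s)
    (S : Finset (ι → ℤ)) (w : (ι → ℤ) → R) (n : ℕ) {x : ι → ℤ} (hx : 0 ≤ x l) :
    (antisymmetrize s (halfSpacePoly S w l (n + 1))).coeff x =
      (stepPoly S w * antisymmetrize s (halfSpacePoly S w l n)).coeff x := by
  rw [antisymmetrize, antisymmetrize, mul_left_comm]
  exact coeff_antisymmetrize_congr hl (c := x l)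
    (fun y hy => coeff_halfSpacePoly_succ S w n (hy ▸ hx)) rfl

variable [Fintype ι] {S : Finset (ι → ℤ)} {w : (ι → ℤ) → R} {l : ι}

lemma coeff_antisymmetrize_halfSpacePoly_eq_zero (hS : ∀ i ∈ S, i l = -1 ∨ i l = 0 ∨ i l = 1)
    (hsym : ∀ k ≠ l, IsFlipInvariant S w k) (n : ℕ) {x : ι → ℤ} {j : ι} (hx : x j = -1) :
    (antisymmetrize {l}ᶜ (halfSpacePoly S w l n)).coeff x = 0 := by
  by_cases hj : j = l
  · subst hj
    rw [coeff_antisymmetrize_congr (by simp) (g := 0)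
      (fun y hy => coeff_halfSpacePoly_eq_zero hS w n hy) hx]
    simp [antisymmetrize]
  · exact coeff_antisymmetrize_eq_zero (by simpa using hj)
      ((hsym j hj).invVar_halfSpacePoly (Ne.symm hj) n) hx

/-- The reflection principle: both sides satisfy the recurrence of the walks in the orthant and
vanish on the hyperplanes `x j = -1`. -/
lemma coeff_walkPoly (hS : ∀ i ∈ S, ∀ j, i j = -1 ∨ i j = 0 ∨ i j = 1)
    (hsym : ∀ k ≠ l, IsFlipInvariant S w k) (n : ℕ) {x : ι → ℤ} (hx : 0 ≤ x) :
    (walkPoly S w n).coeff x = (antisymmetrize {l}ᶜ (halfSpacePoly S w l n)).coeff x := by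
  induction n generalizing x with
  | zero => rw [walkPoly_zero, halfSpacePoly_zero, coeff_antisymmetrize_one _ hx]
  | succ n ih =>
    rw [coeff_antisymmetrize_halfSpacePoly_succ (by simp) S w n (hx l),
      coeff_walkPoly_succ S w n hx]
    refine coeff_stepPoly_mul_congr fun i hi => ?_
    by_cases hxi : 0 ≤ x - i
    · exact ih hxi
    obtain ⟨j, hj⟩ : ∃ j, (x - i) j = -1 := by
      obtain ⟨j, hj⟩ : ∃ j, (x - i) j < 0 := by simpa [Pi.le_def] using hxi
      have hxj : 0 ≤ x j := hx j
      have hij := hS i hi j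
      rw [Pi.sub_apply] at hj
      exact ⟨j, by rw [Pi.sub_apply]; omega⟩
    rw [coeff_walkPoly_eq_zero S w n hxi,
      coeff_antisymmetrize_halfSpacePoly_eq_zero (fun i hi => hS i hi l) hsym n hj]

lemma walkSum_eq_coeffSum_halfSpacePoly (hS : ∀ i ∈ S, ∀ j, i j = -1 ∨ i j = 0 ∨ i j = 1)
    (hsym : ∀ k ≠ l, IsFlipInvariant S w k) (n : ℕ) :
    walkSum S w n = coeffSum (orthantFace {l}ᶜ)
      ((∏ k ∈ {l}ᶜ, (1 + varPow k 1)) * halfSpacePoly S w l n) := by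
  have hinv : ∀ k ∈ ({l}ᶜ : Finset ι), invVar k (halfSpacePoly S w l n) = halfSpacePoly S w l n :=
    fun k hk => by
      have hkl : k ≠ l := by simpa using hk
      exact (hsym k hkl).invVar_halfSpacePoly hkl.symm n
  rw [walkSum_eq_coeffSum, ← coeffSum_antisymmetrize _ hinv]
  exact coeffSum_congr fun x hx => coeff_walkPoly hS hsym n (mem_orthantFace_empty.1 hx)

end Walks

section IntegerExponents

variable {R σ : Type*} [CommRing R] [Finite σ]

/-- The coefficient of a power series at a vector of integer exponents, which is `0` if one of the
exponents is negative. Unlike `MvPowerSeries.coeff`, it turns multiplication by a monomial into a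
shift without side conditions. -/
def intCoeff (e : σ → ℤ) : MvPowerSeries σ R →ₗ[R] R :=
  if 0 ≤ e then MvPowerSeries.coeff (Finsupp.equivFunOnFinite.symm fun j => (e j).toNat) else 0

lemma intCoeff_natCast (m : σ →₀ ℕ) (F : MvPowerSeries σ R) :
    intCoeff (fun j => (m j : ℤ)) F = MvPowerSeries.coeff m F := by
  have hm : Finsupp.equivFunOnFinite.symm (fun j => (m j : ℤ).toNat) = m := by
    ext j
    simp
  have hnonneg : 0 ≤ fun j => (m j : ℤ) := fun j => (m j).cast_nonneg
  rw [intCoeff, if_pos hnonneg, hm]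

lemma intCoeff_of_neg {e : σ → ℤ} {j : σ} (hj : e j < 0) (F : MvPowerSeries σ R) :
    intCoeff e F = 0 := by
  rw [intCoeff, if_neg fun h => (h j).not_gt hj, LinearMap.zero_apply]

lemma intCoeff_monomial_mul (e : σ → ℤ) (m : σ →₀ ℕ) (c : R) (F : MvPowerSeries σ R) :
    intCoeff e (MvPowerSeries.monomial m c * F) = c * intCoeff (fun j => e j - m j) F := by
  by_cases h : ∃ j, e j < m j
  · obtain ⟨j, hj⟩ := h
    rw [intCoeff_of_neg (e := fun j => e j - m j) (sub_neg.2 hj), mul_zero]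
    by_cases he : e j < 0
    · exact intCoeff_of_neg he _
    · rw [intCoeff]
      split_ifs
      · rw [MvPowerSeries.coeff_monomial_mul, if_neg]
        intro hle
        have := hle j
        simp only [Finsupp.equivFunOnFinite_symm_apply_apply] at this
        omega
      · rfl
  · push Not at h
    obtain ⟨m', hm'⟩ : ∃ m' : σ →₀ ℕ, e = fun j => ((m + m') j : ℤ) := by
      refine ⟨Finsupp.equivFunOnFinite.symm fun j => (e j - m j).toNat, funext fun j => ?_⟩
      have := h j
      simp only [Finsupp.add_apply, Finsupp.equivFunOnFinite_symm_apply_apply]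
      omega
    subst hm'
    simp only [Finsupp.add_apply, Nat.cast_add, add_sub_cancel_left, intCoeff_natCast,
      ← MvPowerSeries.coeff_add_monomial_mul m]
    rw [← intCoeff_natCast]
    simp

lemma intCoeff_one (e : σ → ℤ) :
    intCoeff e (1 : MvPowerSeries σ R) = if e = 0 then 1 else 0 := by
  split_ifs with h
  · subst h
    exact (intCoeff_natCast 0 1).trans MvPowerSeries.coeff_zero_one
  · by_cases he : 0 ≤ e
    · rw [intCoeff, if_pos he, MvPowerSeries.coeff_one, if_neg]
      refine fun h0 => h (funext fun j => (he j).antisymm' ?_)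
      exact Int.toNat_eq_zero.1 (DFunLike.congr_fun h0 j)
    · rw [intCoeff, if_neg he, LinearMap.zero_apply]

end IntegerExponents

section Slices

variable {R : Type*} [CommRing R] {d : ℕ}

/-- The exponents of the variables `z_1, …, z_{d+1}, t` in `t ^ n` times the monomial that
corresponds to the lattice point `x` in the substitution `z_k ↦ z_k` for `k ≤ d`,
`z_{d+1} ↦ 1 / z_{d+1}`, `t ↦ t z_1 ⋯ z_{d+1}`. -/
def latticeExponent (n : ℤ) (x : Fin (d + 1) → ℤ) : Fin (d + 2) → ℤ :=
  Fin.snoc (fun j => flipCoord (Fin.last d) x j + n) n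

lemma latticeExponent_last (n : ℤ) (x : Fin (d + 1) → ℤ) :
    latticeExponent n x (Fin.last (d + 1)) = n := by
  simp [latticeExponent]

lemma latticeExponent_castSucc (n : ℤ) (x : Fin (d + 1) → ℤ) (j : Fin (d + 1)) :
    latticeExponent n x j.castSucc = (if j = Fin.last d then -x j else x j) + n := by
  simp only [latticeExponent, Fin.snoc_castSucc, flipCoord_apply, Function.update_apply]
  split_ifs with hj <;> simp [hj]

lemma latticeExponent_sub (n n' : ℤ) (x x' : Fin (d + 1) → ℤ) :
    latticeExponent (n - n') (x - x') = latticeExponent n x - latticeExponent n' x' := by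
  ext j
  refine Fin.lastCases ?_ (fun j => ?_) j
  · simp only [Pi.sub_apply, latticeExponent_last]
  · simp only [Pi.sub_apply, latticeExponent_castSucc]
    split_ifs <;> ring

lemma latticeExponent_eq_zero {n : ℤ} {x : Fin (d + 1) → ℤ} :
    latticeExponent n x = 0 ↔ n = 0 ∧ x = 0 := by
  constructor
  · intro h
    have hn : n = 0 := by simpa [latticeExponent_last] using congrFun h (Fin.last (d + 1))
    refine ⟨hn, funext fun j => ?_⟩
    have := congrFun h j.castSucc
    rw [latticeExponent_castSucc, hn, Pi.zero_apply] at this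
    rw [Pi.zero_apply]
    split_ifs at this <;> omega
  · rintro ⟨rfl, rfl⟩
    simpa using latticeExponent_sub (d := d) 0 0 0 0

lemma latticeExponent_natCast_zero (n : ℕ) :
    latticeExponent (d := d) n 0 =
      fun j => (Finsupp.equivFunOnFinite.symm (fun _ : Fin (d + 2) => n) j : ℤ) := by
  ext j
  refine Fin.lastCases ?_ (fun j => ?_) j
  · simp [latticeExponent_last]
  · simp [latticeExponent_castSucc]

lemma intCoeff_latticeExponent_monomial_mul {m : Fin (d + 2) →₀ ℕ} {n' : ℤ}
    {x' : Fin (d + 1) → ℤ} (hm : latticeExponent n' x' = fun j => (m j : ℤ)) (n : ℤ)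
    (x : Fin (d + 1) → ℤ) (c : R) (F : MvPowerSeries (Fin (d + 2)) R) :
    intCoeff (latticeExponent n x) (MvPowerSeries.monomial m c * F) =
      c * intCoeff (latticeExponent (n - n') (x - x')) F := by
  rw [intCoeff_monomial_mul, latticeExponent_sub, hm]
  rfl

/-- The power series `z_1 ⋯ z_{d+1} ∑ i ∈ T, w i z̄ ^ i`, where `z̄` inverts the last variable;
this is `zProdSbar` for arbitrary weights. -/
def stepSeries (d : ℕ) (T : Finset (Fin (d + 1) → ℤ)) (w : (Fin (d + 1) → ℤ) → R) :
    MvPowerSeries (Fin (d + 2)) R :=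
  ∑ i ∈ T, MvPowerSeries.C (w i) * ∏ j : Fin (d + 1), MvPowerSeries.X j.castSucc ^
    (if j = Fin.last d then (1 - i j).toNat else (i j + 1).toNat)

lemma X_last_mul_stepSeries (T : Finset (Fin (d + 1) → ℤ)) (w : (Fin (d + 1) → ℤ) → R) :
    MvPowerSeries.X (Fin.last (d + 1)) * stepSeries d T w =
      ∑ i ∈ T, MvPowerSeries.monomial
        (Finsupp.equivFunOnFinite.symm fun j => (latticeExponent 1 i j).toNat) (w i) := by
  rw [stepSeries, Finset.mul_sum]
  refine Finset.sum_congr rfl fun i _ => ?_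
  simp only [MvPowerSeries.X_pow_eq, MvPowerSeries.prod_monomial, Finset.prod_const_one]
  rw [← MvPowerSeries.monomial_zero_eq_C_apply, MvPowerSeries.X,
    MvPowerSeries.monomial_mul_monomial, MvPowerSeries.monomial_mul_monomial, zero_add, mul_one,
    one_mul]
  congr 2
  ext j
  refine Fin.lastCases ?_ (fun j => ?_) j
  · simp [latticeExponent_last, Fin.castSucc_ne_last]
  · have hsum (p : Fin (d + 1) → ℕ) :
        (∑ j', Finsupp.single j'.castSucc (p j') : Fin (d + 2) →₀ ℕ) j.castSucc = p j := by
      simp [Finsupp.finsetSum_apply, Finsupp.single_apply, Fin.castSucc_inj]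
    rw [Finsupp.add_apply, Finsupp.single_eq_of_ne (Fin.castSucc_ne_last j), zero_add, hsum,
      Finsupp.equivFunOnFinite_symm_apply_apply, latticeExponent_castSucc]
    split_ifs
    · congr 1
      ring
    · rfl

lemma intCoeff_latticeExponent_X_mul_stepSeries_mul {T : Finset (Fin (d + 1) → ℤ)}
    (hT : ∀ i ∈ T, ∀ j, i j = -1 ∨ i j = 0 ∨ i j = 1) (w : (Fin (d + 1) → ℤ) → R)
    (F : MvPowerSeries (Fin (d + 2)) R) (n : ℤ) (x : Fin (d + 1) → ℤ) :
    intCoeff (latticeExponent n x) (MvPowerSeries.X (Fin.last (d + 1)) * stepSeries d T w * F) =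
      ∑ i ∈ T, w i * intCoeff (latticeExponent (n - 1) (x - i)) F := by
  rw [X_last_mul_stepSeries, Finset.sum_mul, map_sum]
  refine Finset.sum_congr rfl fun i hi =>
    intCoeff_latticeExponent_monomial_mul (funext fun j => ?_) n x (w i) F
  rw [Finsupp.equivFunOnFinite_symm_apply_apply, Int.toNat_of_nonneg]
  refine Fin.lastCases ?_ (fun j => ?_) j
  · simp [latticeExponent_last]
  · have := hT i hi j
    rw [latticeExponent_castSucc]
    split_ifs <;> omega

lemma intCoeff_latticeExponent_X_castSucc_mul (k : Fin d) (n : ℤ) (x : Fin (d + 1) → ℤ)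
    (F : MvPowerSeries (Fin (d + 2)) R) :
    intCoeff (latticeExponent n x) (MvPowerSeries.X k.castSucc.castSucc * F) =
      intCoeff (latticeExponent n (x - Pi.single k.castSucc 1)) F := by
  rw [MvPowerSeries.X, intCoeff_latticeExponent_monomial_mul (n' := 0)
    (x' := Pi.single k.castSucc 1), one_mul, sub_zero]
  ext j
  refine Fin.lastCases ?_ (fun j => ?_) j
  · simp [latticeExponent_last, Fin.castSucc_ne_last]
  · by_cases hj : j = k.castSucc <;>
      simp [latticeExponent_castSucc, hj, Fin.castSucc_ne_last]

lemma intCoeff_latticeExponent_X_last_mul (n : ℤ) (x : Fin (d + 1) → ℤ)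
    (F : MvPowerSeries (Fin (d + 2)) R) :
    intCoeff (latticeExponent n x) (MvPowerSeries.X (Fin.last d).castSucc * F) =
      intCoeff (latticeExponent n (x + Pi.single (Fin.last d) 1)) F := by
  rw [MvPowerSeries.X, intCoeff_latticeExponent_monomial_mul (n' := 0)
    (x' := -Pi.single (Fin.last d) 1), one_mul, sub_zero, sub_neg_eq_add]
  ext j
  refine Fin.lastCases ?_ (fun j => ?_) j
  · simp [latticeExponent_last, Fin.castSucc_ne_last]
  · by_cases hj : j = Fin.last d <;> simp [latticeExponent_castSucc, hj]

/-- The coefficient of `t ^ n` in `F` is `f`, up to the substitution of `latticeExponent`. -/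
def IsSlice (n : ℤ) (F : MvPowerSeries (Fin (d + 2)) R) (f : R[Fin (d + 1) → ℤ]) : Prop :=
  ∀ x, intCoeff (latticeExponent n x) F = f.coeff x

lemma isSlice_of_neg {n : ℤ} (hn : n < 0) (F : MvPowerSeries (Fin (d + 2)) R) :
    IsSlice n F 0 := fun x =>
  intCoeff_of_neg (j := Fin.last (d + 1)) (by rwa [latticeExponent_last]) F

lemma isSlice_zero_one : IsSlice 0 (1 : MvPowerSeries (Fin (d + 2)) R) 1 := fun x => by
  simp only [intCoeff_one, latticeExponent_eq_zero, true_and, AddMonoidAlgebra.one_def,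
    AddMonoidAlgebra.coeff_single, Finsupp.single_apply, eq_comm]

lemma isSlice_one_of_ne_zero {n : ℤ} (hn : n ≠ 0) :
    IsSlice n (1 : MvPowerSeries (Fin (d + 2)) R) 0 := fun x => by
  rw [intCoeff_one, if_neg fun h => hn (latticeExponent_eq_zero.1 h).1]
  rfl

lemma IsSlice.add {n : ℤ} {F G : MvPowerSeries (Fin (d + 2)) R} {f g : R[Fin (d + 1) → ℤ]}
    (hF : IsSlice n F f) (hG : IsSlice n G g) : IsSlice n (F + G) (f + g) := fun x => by
  rw [map_add, hF x, hG x, AddMonoidAlgebra.coeff_add, Finsupp.add_apply]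

lemma IsSlice.sub {n : ℤ} {F G : MvPowerSeries (Fin (d + 2)) R} {f g : R[Fin (d + 1) → ℤ]}
    (hF : IsSlice n F f) (hG : IsSlice n G g) : IsSlice n (F - G) (f - g) := fun x => by
  rw [map_sub, hF x, hG x, AddMonoidAlgebra.coeff_sub, Finsupp.sub_apply]

lemma IsSlice.X_mul_stepSeries_mul {n : ℤ} {F : MvPowerSeries (Fin (d + 2)) R}
    {f : R[Fin (d + 1) → ℤ]} (hF : IsSlice (n - 1) F f) {T : Finset (Fin (d + 1) → ℤ)}
    (hT : ∀ i ∈ T, ∀ j, i j = -1 ∨ i j = 0 ∨ i j = 1) (w : (Fin (d + 1) → ℤ) → R) :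
    IsSlice n (MvPowerSeries.X (Fin.last (d + 1)) * stepSeries d T w * F)
      (stepPoly T w * f) := fun x => by
  rw [intCoeff_latticeExponent_X_mul_stepSeries_mul hT, coeff_stepPoly_mul]
  exact Finset.sum_congr rfl fun i _ => by rw [hF]

lemma IsSlice.prod_one_add_X_mul {n : ℤ} {F : MvPowerSeries (Fin (d + 2)) R}
    {f : R[Fin (d + 1) → ℤ]} (hF : IsSlice n F f) (s : Finset (Fin d)) :
    IsSlice n ((∏ k ∈ s, (1 + MvPowerSeries.X k.castSucc.castSucc)) * F)
      ((∏ k ∈ s, (1 + varPow k.castSucc 1)) * f) := by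
  induction s using Finset.induction_on with
  | empty => simpa using hF
  | insert k s hk ih =>
    rw [Finset.prod_insert hk, Finset.prod_insert hk, mul_assoc, mul_assoc, add_mul, add_mul,
      one_mul, one_mul]
    refine ih.add fun x => ?_
    rw [intCoeff_latticeExponent_X_castSucc_mul, ih, coeff_varPow_mul]

lemma isSlice_stepPoly_pow {T : Finset (Fin (d + 1) → ℤ)}
    (hT : ∀ i ∈ T, ∀ j, i j = -1 ∨ i j = 0 ∨ i j = 1) {w : (Fin (d + 1) → ℤ) → R}
    {M : MvPowerSeries (Fin (d + 2)) R}
    (hM : (1 - MvPowerSeries.X (Fin.last (d + 1)) * stepSeries d T w) * M = 1) (n : ℕ) :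
    IsSlice n M (stepPoly T w ^ n) := by
  have hrec : M = 1 + MvPowerSeries.X (Fin.last (d + 1)) * stepSeries d T w * M := by
    linear_combination hM
  induction n with
  | zero =>
    rw [hrec]
    simpa using isSlice_zero_one.add ((isSlice_of_neg (by simp) M).X_mul_stepSeries_mul hT w)
  | succ n ih =>
    rw [hrec, pow_succ']
    simpa using (isSlice_one_of_ne_zero (by positivity)).add
      (IsSlice.X_mul_stepSeries_mul (n := (n + 1 : ℕ)) (by simpa using ih) hT w)

lemma isSlice_halfSpacePoly {S : Finset (Fin (d + 1) → ℤ)}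
    (hS : ∀ i ∈ S, ∀ j, i j = -1 ∨ i j = 0 ∨ i j = 1) {w : (Fin (d + 1) → ℤ) → R}
    {M Φ : MvPowerSeries (Fin (d + 2)) R}
    (hM : (1 - MvPowerSeries.X (Fin.last (d + 1)) *
      stepSeries d (S.filter fun i => i (Fin.last d) ≤ 0) w) * M = 1)
    (hΦ : (1 - MvPowerSeries.X (Fin.last (d + 1)) * stepSeries d S w) * Φ =
      1 - MvPowerSeries.X (Fin.last (d + 1)) *
        stepSeries d (S.filter fun i => i (Fin.last d) = -1) w * M)
    (n : ℕ) : IsSlice n Φ (halfSpacePoly S w (Fin.last d) n) := by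
  have hfilter (p : (Fin (d + 1) → ℤ) → Prop) [DecidablePred p] :
      ∀ i ∈ S.filter p, ∀ j, i j = -1 ∨ i j = 0 ∨ i j = 1 :=
    fun i hi => hS i (Finset.mem_filter.1 hi).1
  have hrec : Φ = 1 + MvPowerSeries.X (Fin.last (d + 1)) * stepSeries d S w * Φ -
      MvPowerSeries.X (Fin.last (d + 1)) *
        stepSeries d (S.filter fun i => i (Fin.last d) = -1) w * M := by
    linear_combination hΦ
  induction n with
  | zero =>
    rw [hrec, halfSpacePoly_zero]
    simpa using (isSlice_zero_one.add
      ((isSlice_of_neg (by simp) Φ).X_mul_stepSeries_mul hS w)).sub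
      ((isSlice_of_neg (by simp) M).X_mul_stepSeries_mul (hfilter _) w)
  | succ n ih =>
    have hpow := isSlice_stepPoly_pow (hfilter _) hM n
    rw [hrec, halfSpacePoly_succ]
    simpa using ((isSlice_one_of_ne_zero (by positivity)).add
      (IsSlice.X_mul_stepSeries_mul (n := (n + 1 : ℕ)) (by simpa using ih) hS w)).sub
      (IsSlice.X_mul_stepSeries_mul (n := (n + 1 : ℕ)) (by simpa using hpow) (hfilter _) w)

lemma IsSlice.coeff_diag_eq_coeffSum {n : ℕ} {Y F : MvPowerSeries (Fin (d + 2)) R}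
    {f : R[Fin (d + 1) → ℤ]} (hF : IsSlice n F f)
    (hY : (1 - MvPowerSeries.X (Fin.last d).castSucc) * Y = F) :
    MvPowerSeries.coeff (Finsupp.equivFunOnFinite.symm fun _ : Fin (d + 2) => n) Y =
      coeffSum (orthantFace {Fin.last d}ᶜ) f := by
  let axis (y : ℕ) : Fin (d + 1) → ℤ := Pi.single (Fin.last d) (y : ℤ)
  have vanish (G : MvPowerSeries (Fin (d + 2)) R) (y : ℕ) (hy : n + 1 ≤ y) :
      intCoeff (latticeExponent n (axis y)) G = 0 := by
    refine intCoeff_of_neg (j := (Fin.last d).castSucc) ?_ G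
    have haxis : axis y (Fin.last d) = y := Pi.single_eq_same _ _
    rw [latticeExponent_castSucc, if_pos rfl, haxis]
    omega
  have telescope (y : ℕ) : f.coeff (axis y) = intCoeff (latticeExponent n (axis y)) Y -
      intCoeff (latticeExponent n (axis (y + 1))) Y := by
    rw [← hF, ← hY, sub_mul, one_mul, map_sub, intCoeff_latticeExponent_X_last_mul,
      ← Pi.single_add, ← Nat.cast_succ]
  have axis_injective : Function.Injective axis := fun y y' h => by
    exact_mod_cast Pi.single_injective _ h
  rw [orthantFace_compl_singleton, coeffSum_range axis_injective (m := n + 1) fun y hy => by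
    rw [← hF, vanish F y hy]]
  simp only [telescope]
  rw [Finset.sum_range_sub', vanish Y _ le_rfl, sub_zero, ← intCoeff_natCast,
    ← latticeExponent_natCast_zero]
  simp [axis]

lemma stepSeries_filter_add_stepSeries_filter (S : Finset (Fin (d + 1) → ℤ))
    (w : (Fin (d + 1) → ℤ) → R) :
    stepSeries d (S.filter fun i => i (Fin.last d) ≤ 0) w +
        stepSeries d (S.filter fun i => i (Fin.last d) = -1) w =
      stepSeries d (S.filter fun i => i (Fin.last d) ≤ 0)
        fun i => (if i (Fin.last d) = -1 then 2 else 1) * w i := by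
  simp only [stepSeries, Finset.sum_filter]
  rw [← Finset.sum_add_distrib]
  refine Finset.sum_congr rfl fun i _ => ?_
  split_ifs
  · rw [two_mul, map_add, add_mul]
  · rw [one_mul, add_zero]
  · omega
  · rw [add_zero]

lemma exists_one_sub_X_mul_mul_eq_one {σ : Type*} (k : σ) (F : MvPowerSeries σ R) :
    ∃ M, (1 - MvPowerSeries.X k * F) * M = 1 :=
  ⟨_, MvPowerSeries.mul_invOfUnit _ 1 (by simp)⟩

end Slices

lemma walkWeight_eq_walkSum {d : ℕ} (S : Finset (Fin d → ℤ)) (w : (Fin d → ℤ) → ℝ) (n : ℕ) :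
    walkWeight d S w n = walkSum S w n :=
  Finset.sum_congr rfl fun _ _ => if_congr Iff.rfl rfl rfl

lemma zProdSbar_eq_stepSeries (d : ℕ) (S : Finset (Fin (d + 1) → ℤ))
    (w : (Fin (d + 1) → ℤ) → ℝ) : zProdSbar d S w = stepSeries d S w :=
  rfl

lemma zProdQA_eq_stepSeries (d : ℕ) (S : Finset (Fin (d + 1) → ℤ)) (w : (Fin (d + 1) → ℤ) → ℝ) :
    zProdQA d S w = stepSeries d (S.filter fun i => i (Fin.last d) ≤ 0) w :=
  rfl

lemma zProdQ2A_eq_stepSeries (d : ℕ) (S : Finset (Fin (d + 1) → ℤ))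
    (w : (Fin (d + 1) → ℤ) → ℝ) :
    zProdQ2A d S w = stepSeries d (S.filter fun i => i (Fin.last d) ≤ 0)
      fun i => (if i (Fin.last d) = -1 then 2 else 1) * w i :=
  rfl

theorem mostly_symmetric_diagonal_general {R : Type*} [CommRing R] {d : ℕ}
    {S : Finset (Fin (d + 1) → ℤ)} {w : (Fin (d + 1) → ℤ) → R}
    (hS : ∀ i ∈ S, ∀ j, i j = -1 ∨ i j = 0 ∨ i j = 1)
    (hsym : ∀ k : Fin d, IsFlipInvariant S w k.castSucc)
    {F : MvPowerSeries (Fin (d + 2)) R}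
    (hF : F * ((1 - MvPowerSeries.X (Fin.last d).castSucc) *
        (1 - MvPowerSeries.X (Fin.last (d + 1)) * stepSeries d S w) *
        (1 - MvPowerSeries.X (Fin.last (d + 1)) *
          stepSeries d (S.filter fun i => i (Fin.last d) ≤ 0) w)) =
      (∏ j : Fin d, (1 + MvPowerSeries.X j.castSucc.castSucc)) *
        (1 - MvPowerSeries.X (Fin.last (d + 1)) *
          stepSeries d (S.filter fun i => i (Fin.last d) ≤ 0)
            fun i => (if i (Fin.last d) = -1 then 2 else 1) * w i))
    (n : ℕ) :
    walkSum S w n =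
      MvPowerSeries.coeff (Finsupp.equivFunOnFinite.symm fun _ : Fin (d + 2) => n) F := by
  have compl_last : ({Fin.last d}ᶜ : Finset (Fin (d + 1))) = Finset.univ.map Fin.castSuccEmb := by
    ext k
    simp [Fin.exists_castSucc_eq]
  have hsym' : ∀ k ≠ Fin.last d, IsFlipInvariant S w k := fun k hk => by
    obtain ⟨k, rfl⟩ := Fin.exists_castSucc_eq.2 hk
    exact hsym k
  rw [← stepSeries_filter_add_stepSeries_filter] at hF
  set t : MvPowerSeries (Fin (d + 2)) R := MvPowerSeries.X (Fin.last (d + 1))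
  set σ := stepSeries d S w
  set μ := stepSeries d (S.filter fun i => i (Fin.last d) ≤ 0) w
  set α := stepSeries d (S.filter fun i => i (Fin.last d) = -1) w
  obtain ⟨M, hM⟩ : ∃ M, (1 - t * μ) * M = 1 := exists_one_sub_X_mul_mul_eq_one _ _
  obtain ⟨W, hW⟩ : ∃ W, (1 - t * σ) * W = 1 := exists_one_sub_X_mul_mul_eq_one _ _
  have hΦ : IsSlice n ((1 - t * (μ + α)) * W * M) (halfSpacePoly S w (Fin.last d) n) :=
    isSlice_halfSpacePoly hS hM (by linear_combination (1 - t * (μ + α)) * M * hW + hM) n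
  rw [walkSum_eq_coeffSum_halfSpacePoly hS hsym' n,
    (hΦ.prod_one_add_X_mul Finset.univ).coeff_diag_eq_coeffSum (Y := F), compl_last,
    Finset.prod_map]
  · rfl
  · linear_combination W * M * hF -
      (1 - MvPowerSeries.X (Fin.last d).castSucc) * F * ((1 - t * μ) * M * hW + hM)

/-- Diagonal representation for mostly symmetric models in dimension `d+1`
(symmetric over the first `d` axes): `s_n` is the coefficient of
`z_1^n ⋯ z_{d+1}^n t^n` in the power series expansion of `G(z,t)/H(z,t)`, where
`G = (1+z_1)⋯(1+z_{d-1})(1 - t z_1⋯z_d (Q(ẑ) + 2 z_d A(ẑ)))` and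
`H = (1-z_d)(1 - t z_1⋯z_d S̄(z))(1 - t z_1⋯z_d (Q(ẑ) + z_d A(ẑ)))`. -/
theorem mostly_symmetric_diagonal
    (d : ℕ) (S : Finset (Fin (d + 1) → ℤ)) (w : (Fin (d + 1) → ℤ) → ℝ)
    (hstep : ∀ i ∈ S, (∀ j, i j = -1 ∨ i j = 0 ∨ i j = 1) ∧ i ≠ 0)
    (hw : ∀ i ∈ S, 0 < w i)
    (hsym : ∀ k : Fin d, SymmetricAxis (d + 1) S w (Fin.castSucc k))
    (hfwd : ∀ k : Fin (d + 1), ∃ i ∈ S, i k = 1)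
    (hbwd : ∀ k : Fin (d + 1), ∃ i ∈ S, i k = -1)
    (n : ℕ) :
    walkWeight (d + 1) S w n =
      MvPowerSeries.coeff (R := ℝ) (Finsupp.equivFunOnFinite.symm fun _ : Fin (d + 2) => n)
        (((∏ j : Fin d, (1 + MvPowerSeries.X (Fin.castSucc (Fin.castSucc j)))) *
            (1 - MvPowerSeries.X (Fin.last (d + 1)) * zProdQ2A d S w)) *
          ((1 - MvPowerSeries.X (Fin.castSucc (Fin.last d))) *
            (1 - MvPowerSeries.X (Fin.last (d + 1)) * zProdSbar d S w) *
            (1 - MvPowerSeries.X (Fin.last (d + 1)) * zProdQA d S w))⁻¹) := by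
  rw [walkWeight_eq_walkSum, zProdSbar_eq_stepSeries, zProdQA_eq_stepSeries,
    zProdQ2A_eq_stepSeries]
  refine mostly_symmetric_diagonal_general (fun i hi => (hstep i hi).1) hsym ?_ n
  rw [mul_assoc, MvPowerSeries.inv_mul_cancel _ (by simp), mul_one]

end
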